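/- arXiv:1409.6466 — 5 statements merged into one kernel-verified Lean document; each statement's English description precedes it below -/
import Mathlib

section
/- Let S be a finite nonempty set and P : S × S → [0,1]. For every s ∈ S, r_P(s) = max_{t ∈ S} min( P⁺(s,t), P⁺(t,t) ), where P⁺ is the max–min transitive closure of P. -/
/-!
For a threshold `a`, consider the graph whose edges are the pairs `(x, y)` with `a < P x y`. As `S`
is finite, the infimum over a run is attained, so `a < r_P(s)` means that this graph has an infinite
path from `s`. Likewise `a < P⁺(s,t)` means that it has a nonempty path from `s` to `t`. Hence
comparing both sides with every `a` reduces the equality to a fact about finite graphs: there is an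
infinite path from `s` iff some `t` is reachable from `s` and lies on a cycle.
-/

/-- `[0,1]` as a complete lattice. -/
instance : Fact ((0:ℝ) ≤ 1) := ⟨zero_le_one⟩

/-- The value of a run `σ`: `inf_{i ≥ 0} P(σ i, σ (i+1))`. -/
noncomputable def valP {S : Type*} (P : S → S → unitInterval) (σ : ℕ → S) : unitInterval :=
  ⨅ i : ℕ, P (σ i) (σ (i + 1))

/-- `r_P(s)`: the supremum of the values of all runs starting at `s`. -/
noncomputable def rP {S : Type*} (P : S → S → unitInterval) (s : S) : unitInterval :=
  ⨆ σ : {σ : ℕ → S // σ 0 = s}, valP P σ.1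

/-- The max–min transitive closure `P⁺(s,t)`: sup over `n ≥ 1` and sequences
`s = t₀, t₁, …, t_n = t` of `min_{0 ≤ i < n} P(tᵢ, tᵢ₊₁)`. -/
noncomputable def Pplus {S : Type*} (P : S → S → unitInterval) (s t : S) : unitInterval :=
  ⨆ n : ℕ, ⨆ c : {c : Fin (n + 2) → S // c 0 = s ∧ c (Fin.last (n + 1)) = t},
    ⨅ i : Fin (n + 1), P (c.1 i.castSucc) (c.1 i.succ)

open Relation

section Relation

variable {α : Type*} {r : α → α → Prop} {a b : α}

theorem transGen_iff_exists_fin_chain :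
    TransGen r a b ↔ ∃ n : ℕ, ∃ c : Fin (n + 2) → α,
      (c 0 = a ∧ c (Fin.last (n + 1)) = b) ∧ ∀ i : Fin (n + 1), r (c i.castSucc) (c i.succ) := by
  constructor
  · intro hab
    induction hab using TransGen.head_induction_on with
    | @single a hab => exact ⟨0, ![a, b], ⟨rfl, rfl⟩, fun i => by simpa [Fin.fin_one_eq_zero i]⟩
    | @head a d had _ ih =>
      obtain ⟨n, c, ⟨rfl, rfl⟩, hc⟩ := ih
      exact ⟨n + 1, Fin.cons a c, ⟨rfl, rfl⟩, Fin.cases had hc⟩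
  · rintro ⟨n, c, ⟨rfl, rfl⟩, hc⟩
    exact (Fin.liftFun_iff_succ (TransGen r)).2 (fun i => .single (hc i)) (Fin.last_pos)

theorem exists_run_of_transGen_of_transGen_self (hab : TransGen r a b) (hbb : TransGen r b b) :
    ∃ σ : ℕ → α, σ 0 = a ∧ ∀ i, r (σ i) (σ (i + 1)) := by
  -- A run from `a` exists as soon as `a` is not accessible, and no point on a cycle is accessible.
  refine not_acc_iff_exists_descending_chain.1 fun ha : Acc (Function.swap r) a => ?_
  have hb : Acc (TransGen (Function.swap r)) b := ha.transGen.inv (transGen_swap.2 hab)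
  exact not_acc_iff_exists_descending_chain.2 ⟨fun _ => b, rfl, fun _ => transGen_swap.2 hbb⟩ hb

theorem exists_transGen_and_transGen_self_of_run [Finite α] {σ : ℕ → α}
    (hσ : ∀ i, r (σ i) (σ (i + 1))) : ∃ t, TransGen r (σ 0) t ∧ TransGen r t t := by
  have path {i j : ℕ} (hij : i < j) : TransGen r (σ i) (σ j) :=
    Nat.rel_of_forall_rel_succ_of_lt (TransGen r) (fun k => .single (hσ k)) hij
  -- Only positive times are considered, so that the path from `σ 0` to `t` is nonempty.
  obtain ⟨i, j, hij, h⟩ := Set.finite_univ.exists_lt_map_eq_of_forall_mem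
    (f := fun n : ℕ => σ (n + 1)) fun _ => Set.mem_univ _
  have cycle := path (Nat.succ_lt_succ hij)
  exact ⟨σ (i + 1), path i.succ_pos, by rwa [← h] at cycle⟩

theorem exists_run_iff_exists_transGen_and_transGen_self [Finite α] :
    (∃ σ : ℕ → α, σ 0 = a ∧ ∀ i, r (σ i) (σ (i + 1))) ↔
      ∃ t, TransGen r a t ∧ TransGen r t t := by
  constructor
  · rintro ⟨σ, rfl, hσ⟩
    exact exists_transGen_and_transGen_self_of_run hσ
  · rintro ⟨t, hat, htt⟩
    exact exists_run_of_transGen_of_transGen_self hat htt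

end Relation

theorem lt_ciInf_iff_of_finite_range {ι L : Type*} [ConditionallyCompleteLinearOrder L] [Nonempty ι]
    {f : ι → L} {a : L} (hf : (Set.range f).Finite) : a < ⨅ i, f i ↔ ∀ i, a < f i :=
  (hf.lt_csInf_iff (Set.range_nonempty f)).trans Set.forall_mem_range

section CompleteLinearOrder

variable {S L : Type*} [CompleteLinearOrder L]

/-- The value `⨅ i, P (σ i) (σ (i + 1))` of a run, as `valP` but for possibilities in an arbitrary
complete linear order. -/
def runValue (P : S → S → L) (σ : ℕ → S) : L :=
  ⨅ i : ℕ, P (σ i) (σ (i + 1))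

/-- The supremum of the values of the runs from `s`, as `rP` but for possibilities in an arbitrary
complete linear order. -/
def supRunValue (P : S → S → L) (s : S) : L :=
  ⨆ σ : {σ : ℕ → S // σ 0 = s}, runValue P σ.1

/-- The max–min transitive closure, as `Pplus` but for possibilities in an arbitrary complete linear
order. Paths with `n + 1` steps are encoded as maps from `Fin (n + 2)`. -/
def maxMinTransClosure (P : S → S → L) (s t : S) : L :=
  ⨆ n : ℕ, ⨆ c : {c : Fin (n + 2) → S // c 0 = s ∧ c (Fin.last (n + 1)) = t},
    ⨅ i : Fin (n + 1), P (c.1 i.castSucc) (c.1 i.succ)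

variable {P : S → S → L} {a : L} {s t : S}

theorem lt_runValue_iff [Finite S] {σ : ℕ → S} :
    a < runValue P σ ↔ ∀ i, a < P (σ i) (σ (i + 1)) :=
  lt_ciInf_iff_of_finite_range <| (Set.finite_range P.uncurry).subset <|
    Set.range_subset_iff.2 fun i => ⟨(σ i, σ (i + 1)), rfl⟩

theorem lt_supRunValue_iff [Finite S] :
    a < supRunValue P s ↔ ∃ σ : ℕ → S, σ 0 = s ∧ ∀ i, a < P (σ i) (σ (i + 1)) := by
  simp only [supRunValue, lt_iSup_iff, lt_runValue_iff, Subtype.exists, exists_prop]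

theorem lt_maxMinTransClosure_iff :
    a < maxMinTransClosure P s t ↔ TransGen (fun x y => a < P x y) s t := by
  simp only [maxMinTransClosure, lt_iSup_iff, lt_ciInf_iff_of_finite_range (Set.finite_range _),
    Subtype.exists, exists_prop, transGen_iff_exists_fin_chain]

theorem rP_eq_sup_Pplus_general [Finite S] (P : S → S → L) (s : S) :
    supRunValue P s = ⨆ t : S, min (maxMinTransClosure P s t) (maxMinTransClosure P t t) := by
  refine eq_of_forall_lt_iff fun a => ?_
  calc a < supRunValue P s
    _ ↔ ∃ σ : ℕ → S, σ 0 = s ∧ ∀ i, a < P (σ i) (σ (i + 1)) := lt_supRunValue_iff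
    _ ↔ ∃ t, TransGen (fun x y => a < P x y) s t ∧ TransGen (fun x y => a < P x y) t t :=
      exists_run_iff_exists_transGen_and_transGen_self (r := fun x y => a < P x y)
    _ ↔ a < ⨆ t : S, min (maxMinTransClosure P s t) (maxMinTransClosure P t t) := by
      simp only [lt_iSup_iff, lt_min_iff, lt_maxMinTransClosure_iff]

end CompleteLinearOrder

theorem rP_eq_sup_Pplus {S : Type*} [Fintype S] [Nonempty S]
    (P : S → S → unitInterval) (s : S) :
    rP P s = ⨆ t : S, min (Pplus P s t) (Pplus P t t) :=
  rP_eq_sup_Pplus_general P s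
end

section
/- Let S be a finite nonempty set and P : S × S → [0,1]. For every s ∈ S, the supremum defining r_P(s) is attained by an eventually periodic (lasso-shaped) run: there exist a finite sequence s = s₀, s₁, …, s_m and indices i < j with s_i = s_j such that the run σ that follows s₀ … s_{j-1} and then repeats the cycle s_i … s_{j-1} forever satisfies val_P(σ) = r_P(s). -/
section Bottleneck

variable {S α : Type*}

/-- The weights of the transitions taken by the run `σ`. They are kept as a set, since the value of
a run does not depend on their order or multiplicity. -/
def transitionWeights (P : S → S → α) (σ : ℕ → S) : Set α :=
  Set.range fun n ↦ P (σ n) (σ (n + 1))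

/-- The bottleneck of a run: the infimum of the weights of its transitions. It generalizes `valP`
to weights outside `[0,1]`. -/
noncomputable def bottleneck [InfSet α] (P : S → S → α) (σ : ℕ → S) : α :=
  sInf (transitionWeights P σ)

lemma transitionWeights_nonempty (P : S → S → α) (σ : ℕ → S) : (transitionWeights P σ).Nonempty :=
  Set.range_nonempty _

lemma transitionWeights_subset_range_uncurry (P : S → S → α) (σ : ℕ → S) :
    transitionWeights P σ ⊆ Set.range (Function.uncurry P) :=
  Set.range_comp_subset_range (fun n ↦ (σ n, σ (n + 1))) (Function.uncurry P)

lemma finite_transitionWeights [Finite S] (P : S → S → α) (σ : ℕ → S) :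
    (transitionWeights P σ).Finite :=
  (Set.finite_range _).subset (transitionWeights_subset_range_uncurry P σ)

variable [ConditionallyCompleteLinearOrder α] [Finite S]

lemma bottleneck_mem_range_uncurry (P : S → S → α) (σ : ℕ → S) :
    bottleneck P σ ∈ Set.range (Function.uncurry P) :=
  transitionWeights_subset_range_uncurry P σ <|
    (transitionWeights_nonempty P σ).csInf_mem (finite_transitionWeights P σ)

lemma finite_range_bottleneck {ι : Sort*} (P : S → S → α) (σ : ι → ℕ → S) :
    (Set.range fun x ↦ bottleneck P (σ x)).Finite :=
  (Set.finite_range (Function.uncurry P)).subset <|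
    Set.range_subset_iff.2 fun x ↦ bottleneck_mem_range_uncurry P (σ x)

lemma bottleneck_le_iSup (P : S → S → α) {s : S} {σ : ℕ → S} (hσ : σ 0 = s) :
    bottleneck P σ ≤ ⨆ τ : {τ : ℕ → S // τ 0 = s}, bottleneck P τ.1 :=
  le_ciSup (f := fun τ : {τ : ℕ → S // τ 0 = s} ↦ bottleneck P τ.1)
    (finite_range_bottleneck P _).bddAbove ⟨σ, hσ⟩

lemma exists_bottleneck_eq_iSup (P : S → S → α) (s : S) :
    ∃ σ : ℕ → S, σ 0 = s ∧
      bottleneck P σ = ⨆ τ : {τ : ℕ → S // τ 0 = s}, bottleneck P τ.1 := by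
  have : Nonempty {τ : ℕ → S // τ 0 = s} := ⟨⟨fun _ ↦ s, rfl⟩⟩
  obtain ⟨⟨σ, hσ⟩, hmax⟩ := (Set.range_nonempty _).csSup_mem
    (finite_range_bottleneck P (Subtype.val : {τ : ℕ → S // τ 0 = s} → ℕ → S))
  exact ⟨σ, hσ, hmax⟩

end Bottleneck

lemma add_one_mod_eq_ite (k p : ℕ) :
    (k + 1) % p = if k % p + 1 = p then 0 else k % p + 1 := by
  rw [← Nat.mod_add_mod]
  split_ifs with wraps
  · rw [wraps, Nat.mod_self]
  · rcases p.eq_zero_or_pos with rfl | hp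
    · rw [Nat.mod_zero]
    · exact Nat.mod_eq_of_lt (lt_of_le_of_ne (Nat.mod_lt k hp) wraps)

section Lasso

variable {S : Type*} {i j : ℕ}

/-- The lasso that follows `σ 0, …, σ (i - 1)` and then repeats the cycle `σ i, …, σ (j - 1)`
forever. It is meant for `i < j`; since `m % 0 = m`, it is `σ` itself when `j ≤ i`. -/
def lasso (σ : ℕ → S) (i j n : ℕ) : S :=
  if n < i then σ n else σ (i + (n - i) % (j - i))

lemma lasso_of_lt (σ : ℕ → S) (j : ℕ) {n : ℕ} (hn : n < i) : lasso σ i j n = σ n :=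
  if_pos hn

lemma lasso_add (σ : ℕ → S) (i j k : ℕ) : lasso σ i j (i + k) = σ (i + k % (j - i)) := by
  simp [lasso]

lemma lasso_zero (σ : ℕ → S) (i j : ℕ) : lasso σ i j 0 = σ 0 := by
  cases i <;> simp [lasso]

lemma lasso_periodic (σ : ℕ → S) (hij : i ≤ j) (k : ℕ) :
    lasso σ i j (j + k) = lasso σ i j (i + k % (j - i)) := by
  have shift : j + k = i + (k + (j - i)) := by lia
  rw [shift, lasso_add, lasso_add, Nat.add_mod_right, Nat.mod_mod]

lemma exists_transition_eq_lasso {σ : ℕ → S} (h : σ i = σ j) (n : ℕ) :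
    ∃ m, σ m = lasso σ i j n ∧ σ (m + 1) = lasso σ i j (n + 1) := by
  rcases lt_or_ge n i with hn | hn
  · refine ⟨n, (lasso_of_lt σ j hn).symm, ?_⟩
    rcases (Nat.succ_le_of_lt hn).lt_or_eq with hlt | rfl
    · exact (lasso_of_lt σ j hlt).symm
    · simpa using (lasso_add σ (n + 1) j 0).symm
  · obtain ⟨k, rfl⟩ := Nat.exists_eq_add_of_le hn
    refine ⟨i + k % (j - i), (lasso_add σ i j k).symm, ?_⟩
    rw [add_assoc, add_assoc, lasso_add, add_one_mod_eq_ite]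
    split_ifs with wraps
    · -- The step `σ (j - 1) → σ i` closing the cycle is the step `σ (j - 1) → σ j`.
      rw [wraps, add_zero, h, Nat.add_sub_cancel' (by lia)]
    · rfl

lemma transitionWeights_lasso_subset {α : Type*} (P : S → S → α) {σ : ℕ → S} (h : σ i = σ j) :
    transitionWeights P (lasso σ i j) ⊆ transitionWeights P σ := by
  rintro _ ⟨n, rfl⟩
  obtain ⟨m, hsource, htarget⟩ := exists_transition_eq_lasso h n
  exact ⟨m, congrArg₂ P hsource htarget⟩

lemma bottleneck_le_bottleneck_lasso {α : Type*} [ConditionallyCompleteLattice α] {P : S → S → α}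
    {σ : ℕ → S} (hbdd : BddBelow (transitionWeights P σ)) (h : σ i = σ j) :
    bottleneck P σ ≤ bottleneck P (lasso σ i j) :=
  csInf_le_csInf hbdd (transitionWeights_nonempty P _) (transitionWeights_lasso_subset P h)

end Lasso

theorem rP_attained_by_lasso_general {S α : Type*} [Finite S] [ConditionallyCompleteLinearOrder α]
    (P : S → S → α) (s : S) :
    ∃ (σ : ℕ → S) (i j : ℕ), σ 0 = s ∧ i < j ∧ σ i = σ j ∧
      (∀ k : ℕ, σ (j + k) = σ (i + k % (j - i))) ∧
      bottleneck P σ = ⨆ τ : {τ : ℕ → S // τ 0 = s}, bottleneck P τ.1 := by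
  obtain ⟨σ, hstart, hmax⟩ := exists_bottleneck_eq_iSup P s
  obtain ⟨i, j, hij, hrevisit⟩ :=
    Set.finite_univ.exists_lt_map_eq_of_forall_mem (f := σ) fun _ ↦ Set.mem_univ _
  have hlasso_start : lasso σ i j 0 = s := (lasso_zero σ i j).trans hstart
  have hclosed : lasso σ i j i = lasso σ i j j := by
    simpa using (lasso_periodic σ hij.le 0).symm
  have hbdd : BddBelow (transitionWeights P σ) := (finite_transitionWeights P σ).bddBelow
  refine ⟨lasso σ i j, i, j, hlasso_start, hij, hclosed, lasso_periodic σ hij.le, ?_⟩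
  exact (bottleneck_le_iSup P hlasso_start).antisymm
    (hmax.ge.trans (bottleneck_le_bottleneck_lasso hbdd hrevisit))

/-- The supremum defining `r_P(s)` is attained by a lasso-shaped run: there is a run `σ`
from `s` and indices `i < j` with `σ i = σ j` such that `σ` follows its first `j` states
and then repeats the cycle `σ i, …, σ (j-1)` forever, and `val_P(σ) = r_P(s)`. -/
theorem rP_attained_by_lasso {S : Type*} [Fintype S] [Nonempty S]
    (P : S → S → unitInterval) (s : S) :
    ∃ (σ : ℕ → S) (i j : ℕ), σ 0 = s ∧ i < j ∧ σ i = σ j ∧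
      (∀ k : ℕ, σ (j + k) = σ (i + k % (j - i))) ∧ valP P σ = rP P s := by
  exact rP_attained_by_lasso_general P s
end

section
/- Let S be a finite nonempty set and P : S × S → [0,1]. Then P is normal (i.e. sup_{t ∈ S} P(s,t) = 1 for every s ∈ S) if and only if r_P(s) = 1 for every s ∈ S. -/
theorem exists_seq_rel_succ {S : Type*} {r : S → S → Prop} (h : ∀ s, ∃ t, r s t) (s : S) :
    ∃ σ : ℕ → S, σ 0 = s ∧ ∀ i, r (σ i) (σ (i + 1)) := by
  choose next hnext using h
  refine ⟨fun i => next^[i] s, rfl, fun i => ?_⟩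
  simpa only [Function.iterate_succ_apply'] using hnext (next^[i] s)

section

variable {S : Type*} (P : S → S → unitInterval)

theorem valP_le_rP (σ : ℕ → S) : valP P σ ≤ rP P (σ 0) :=
  le_iSup (fun τ : {τ : ℕ → S // τ 0 = σ 0} => valP P τ.1) ⟨σ, rfl⟩

theorem valP_le_iSup (σ : ℕ → S) : valP P σ ≤ ⨆ t, P (σ 0) t :=
  (iInf_le _ 0).trans (le_iSup (P (σ 0)) (σ 1))

theorem rP_le_iSup (s : S) : rP P s ≤ ⨆ t, P s t := by
  refine iSup_le ?_
  rintro ⟨σ, rfl⟩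
  exact valP_le_iSup P σ

variable {P} in
theorem le_rP_of_forall_exists_le {c : unitInterval} (h : ∀ s, ∃ t, c ≤ P s t) (s : S) :
    c ≤ rP P s := by
  obtain ⟨σ, rfl, hσ⟩ := exists_seq_rel_succ h s
  exact (le_iInf hσ).trans (valP_le_rP P σ)

theorem iInf_iSup_le_rP (s : S) : (⨅ u, ⨆ t, P u t) ≤ rP P s := by
  refine le_of_forall_lt_imp_le_of_dense fun c hc => le_rP_of_forall_exists_le (fun u => ?_) s
  obtain ⟨t, ht⟩ := lt_iSup_iff.mp (hc.trans_le (iInf_le _ u))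
  exact ⟨t, ht.le⟩

theorem iInf_rP_eq_iInf_iSup : (⨅ s, rP P s) = ⨅ s, ⨆ t, P s t :=
  le_antisymm (iInf_mono (rP_le_iSup P)) (le_iInf (iInf_iSup_le_rP P))

theorem normal_iff_rP_eq_one_general : (∀ s, (⨆ t, P s t) = 1) ↔ ∀ s, rP P s = 1 := by
  have one_eq_top : (1 : unitInterval) = ⊤ := rfl
  simp only [one_eq_top, ← iInf_eq_top, iInf_rP_eq_iInf_iSup]

end

/-- `P` is normal (`sup_{t} P(s,t) = 1` for every `s`) iff `r_P(s) = 1` for every `s`. -/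
theorem normal_iff_rP_eq_one {S : Type*} [Fintype S] [Nonempty S]
    (P : S → S → unitInterval) :
    (∀ s : S, (⨆ t : S, P s t) = 1) ↔ (∀ s : S, rP P s = 1) :=
  normal_iff_rP_eq_one_general P
end

section
/- Let S be a finite nonempty set, P : S × S → [0,1], and a : S → [0,1]. Define A : S → [0,1] by A(s) := sup over all runs σ from s of min( val_P(σ), inf_{i ≥ 0} a(σ i) ). Then A is a fixpoint of the operator f, i.e. for every s ∈ S, A(s) = min( a(s), max_{t ∈ S} min( P(s,t), A(t), r_P(t) ) ). -/
/-- `A(s) = Po(s ⊨ □Φ)`: the sup over runs `σ` from `s` of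
`min(val_P(σ), inf_{i≥0} a(σ i))`, where `a = ||Φ||`. -/
noncomputable def alwaysSem {S : Type*} (P : S → S → unitInterval)
    (a : S → unitInterval) (s : S) : unitInterval :=
  ⨆ σ : {σ : ℕ → S // σ 0 = s}, min (valP P σ.1) (⨅ i : ℕ, a (σ.1 i))

section Frame

variable {S L : Type*} [Order.Frame L]

/-- The possibility of an infinite run from `s`, the paper's `r_P(s)`, with values in an arbitrary
frame. -/
def runSup (P : S → S → L) (s : S) : L :=
  ⨆ σ : {σ : ℕ → S // σ 0 = s}, ⨅ i, P (σ.1 i) (σ.1 (i + 1))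

/-- The semantics of `Po(□Φ)` for `a = ||Φ||`, the paper's `A(s)`, with values in an arbitrary
frame. -/
def alwaysSup (P : S → S → L) (a : S → L) (s : S) : L :=
  ⨆ σ : {σ : ℕ → S // σ 0 = s}, (⨅ i, P (σ.1 i) (σ.1 (i + 1))) ⊓ ⨅ i, a (σ.1 i)

theorem iInf_le_runSup (P : S → S → L) (σ : ℕ → S) :
    ⨅ i, P (σ i) (σ (i + 1)) ≤ runSup P (σ 0) :=
  le_iSup (fun τ : {τ : ℕ → S // τ 0 = σ 0} ↦ ⨅ i, P (τ.1 i) (τ.1 (i + 1))) ⟨σ, rfl⟩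

theorem runSup_eq_iSup_inf_runSup (P : S → S → L) (s : S) :
    runSup P s = ⨆ t, P s t ⊓ runSup P t := by
  apply le_antisymm
  · refine iSup_le ?_
    rintro ⟨σ, rfl⟩
    rw [← inf_iInf_nat_succ]
    exact le_iSup_of_le (σ 1) (inf_le_inf_left _ (iInf_le_runSup P fun i ↦ σ (i + 1)))
  · refine iSup_le fun t ↦ ?_
    rw [runSup, inf_iSup_eq]
    refine iSup_le ?_
    rintro ⟨σ, rfl⟩
    let prepended : ℕ → S := fun n ↦ Nat.casesOn n s σ
    calc P s (σ 0) ⊓ ⨅ i, P (σ i) (σ (i + 1))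
        = ⨅ i, P (prepended i) (prepended (i + 1)) :=
          inf_iInf_nat_succ fun i ↦ P (prepended i) (prepended (i + 1))
      _ ≤ runSup P s := iInf_le_runSup P prepended

theorem alwaysSup_eq_runSup (P : S → S → L) (a : S → L) :
    alwaysSup P a = runSup fun s t ↦ a s ⊓ P s t := by
  funext s
  simp only [alwaysSup, runSup, iInf_inf_eq, inf_comm]

theorem alwaysSup_le_runSup (P : S → S → L) (a : S → L) (s : S) :
    alwaysSup P a s ≤ runSup P s :=
  iSup_mono fun _ ↦ inf_le_left

theorem alwaysSem_is_fixpoint_general (P : S → S → L) (a : S → L) (s : S) :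
    alwaysSup P a s = a s ⊓ ⨆ t, P s t ⊓ (alwaysSup P a t ⊓ runSup P t) :=
  calc alwaysSup P a s
      = ⨆ t, a s ⊓ P s t ⊓ alwaysSup P a t := by
        rw [alwaysSup_eq_runSup]
        exact runSup_eq_iSup_inf_runSup _ s
    _ = a s ⊓ ⨆ t, P s t ⊓ alwaysSup P a t := by
        simp only [inf_assoc, inf_iSup_eq]
    _ = a s ⊓ ⨆ t, P s t ⊓ (alwaysSup P a t ⊓ runSup P t) := by
        simp only [inf_eq_left.2 (alwaysSup_le_runSup P a _)]

end Frame

/-- `A` is a fixpoint of the operator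
`f(Z)(s) = min( a(s), max_{t} min(P(s,t), Z(t), r_P(t)) )`. -/
theorem alwaysSem_is_fixpoint {S : Type*} [Fintype S] [Nonempty S]
    (P : S → S → unitInterval) (a : S → unitInterval) (s : S) :
    alwaysSem P a s
      = min (a s) (⨆ t : S, min (P s t) (min (alwaysSem P a t) (rP P t))) :=
  alwaysSem_is_fixpoint_general P a s
end

section
/- Let S be a finite nonempty set, P : S × S → [0,1] normal (sup_{t ∈ S} P(s,t) = 1 for every s), a, b : S → [0,1], and v ∈ [0,1]. Define PoU(s) := sup_{j ∈ ℕ} [ sup over all finite sequences t₀ = s, t₁, …, t_j in S of min( min_{0 ≤ k < j} min( a(t_k), P(t_k, t_{k+1}) ), b(t_j) ) ]. Then PoU(s) ≤ v if and only if b(s) ≤ v and sup{ min_{0 ≤ k < j} P(t_k, t_{k+1}) : j ∈ ℕ, t₀ = s, t₁, …, t_j ∈ S with a(t_k) > v for all 0 ≤ k < j and b(t_j) > v } ≤ v (with sup over the empty set equal to 0). -/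
/-- `PoU(s) = Po(s ⊨ Φ′ ⊔ Φ″)` for a normal `P`: the sup over `j ∈ ℕ` and finite
sequences `t₀ = s, …, t_j` of `min( min_{0≤k<j} min(a(t_k), P(t_k, t_{k+1})), b(t_j) )`. -/
noncomputable def PoUntil {S : Type*} (P : S → S → unitInterval)
    (a b : S → unitInterval) (s : S) : unitInterval :=
  ⨆ j : ℕ, ⨆ t : {t : Fin (j + 1) → S // t 0 = s},
    min (⨅ k : Fin j, min (a (t.1 k.castSucc)) (P (t.1 k.castSucc) (t.1 k.succ)))
      (b (t.1 (Fin.last j)))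

theorem lt_iInf_iff_of_finite {ι L : Type*} [Finite ι] [CompleteLinearOrder L] {f : ι → L}
    {v : L} (hv : v < ⊤) :
    v < ⨅ i, f i ↔ ∀ i, v < f i := by
  cases nonempty_fintype ι
  simp [← Finset.inf_univ_eq_iInf, Finset.lt_inf_iff hv]

section CompleteLattice

variable {S L : Type*} [CompleteLattice L]

/-- The possibility of the finite path `t 0, …, t j`: the meet of the possibilities of its steps,
which is `⊤` for a path without steps. -/
def pathPossibility (P : S → S → L) {j : ℕ} (t : Fin (j + 1) → S) : L :=
  ⨅ k : Fin j, P (t k.castSucc) (t k.succ)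

/-- The degree to which the finite path `t` is possible and witnesses `a` until `b` at its last
state. -/
def pathUntilPossibility (P : S → S → L) (a b : S → L) {j : ℕ} (t : Fin (j + 1) → S) : L :=
  (⨅ k : Fin j, a (t k.castSucc) ⊓ P (t k.castSucc) (t k.succ)) ⊓ b (t (Fin.last j))

/-- The possibility of `a` until `b` from `s`, for fuzzy state predicates `a` and `b`: `PoUntil`
with truth degrees in an arbitrary complete lattice. -/
def untilPossibility (P : S → S → L) (a b : S → L) (s : S) : L :=
  ⨆ j : ℕ, ⨆ t : {t : Fin (j + 1) → S // t 0 = s}, pathUntilPossibility P a b t.1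

/-- The possibility of `A` until `B` from `s`, for crisp state predicates given as sets: the
supremum of the possibilities of the finite paths from `s` through `A` to `B`. -/
def crispUntilPossibility (P : S → S → L) (A B : Set S) (s : S) : L :=
  ⨆ j : ℕ, ⨆ t : {t : Fin (j + 1) → S //
      t 0 = s ∧ (∀ k : Fin j, t k.castSucc ∈ A) ∧ t (Fin.last j) ∈ B},
    pathPossibility P t.1

theorem pathUntilPossibility_eq_inf (P : S → S → L) (a b : S → L) {j : ℕ} (t : Fin (j + 1) → S) :
    pathUntilPossibility P a b t =
      (⨅ k : Fin j, a (t k.castSucc)) ⊓ pathPossibility P t ⊓ b (t (Fin.last j)) := by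
  rw [pathUntilPossibility, iInf_inf_eq, pathPossibility]

theorem le_untilPossibility (P : S → S → L) (a b : S → L) (s : S) :
    b s ≤ untilPossibility P a b s :=
  calc
    b s = pathUntilPossibility P a b (fun _ : Fin 1 ↦ s) := by simp [pathUntilPossibility]
    _ ≤ untilPossibility P a b s := le_iSup₂_of_le 0 ⟨fun _ ↦ s, rfl⟩ le_rfl

end CompleteLattice

section CompleteLinearOrder

variable {S L : Type*} [CompleteLinearOrder L] {v : L}

theorem lt_pathUntilPossibility_iff (P : S → S → L) (a b : S → L) {j : ℕ} (t : Fin (j + 1) → S) :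
    v < pathUntilPossibility P a b t ↔
      ((∀ k : Fin j, v < a (t k.castSucc)) ∧ v < b (t (Fin.last j))) ∧
        v < pathPossibility P t := by
  rw [pathUntilPossibility_eq_inf, lt_inf_iff, lt_inf_iff, and_right_comm]
  refine and_congr_left' (and_congr_left fun hb ↦ ?_)
  exact lt_iInf_iff_of_finite hb.lt_top

theorem lt_untilPossibility_iff (P : S → S → L) (a b : S → L) (s : S) :
    v < untilPossibility P a b s ↔
      v < crispUntilPossibility P {x | v < a x} {x | v < b x} s := by
  simp only [untilPossibility, crispUntilPossibility, lt_iSup_iff, Subtype.exists, exists_prop,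
    lt_pathUntilPossibility_iff, Set.mem_ofPred_eq, and_assoc]

theorem until_threshold_le_general (P : S → S → L) (a b : S → L) (v : L) (s : S) :
    untilPossibility P a b s ≤ v ↔
      b s ≤ v ∧ crispUntilPossibility P {x | v < a x} {x | v < b x} s ≤ v := by
  have hcrisp : untilPossibility P a b s ≤ v ↔
      crispUntilPossibility P {x | v < a x} {x | v < b x} s ≤ v :=
    le_iff_le_iff_lt_iff_lt.2 (lt_untilPossibility_iff P a b s)
  exact ⟨fun h ↦ ⟨(le_untilPossibility P a b s).trans h, hcrisp.1 h⟩, fun h ↦ hcrisp.2 h.2⟩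

end CompleteLinearOrder

/-- For normal `P`: `PoU(s) ≤ v` iff `b(s) ≤ v` and the sup, over finite sequences
`t₀ = s, …, t_j` with `a(t_k) > v` for all `k < j` and `b(t_j) > v`, of
`min_{0≤k<j} P(t_k, t_{k+1})` is at most `v` (the sup over the empty set being `0`). -/
theorem until_threshold_le {S : Type*} [Fintype S] [Nonempty S]
    (P : S → S → unitInterval) (hP : ∀ s : S, (⨆ t : S, P s t) = 1)
    (a b : S → unitInterval) (v : unitInterval) (s : S) :
    PoUntil P a b s ≤ v ↔
      b s ≤ v ∧
      (⨆ j : ℕ, ⨆ t : {t : Fin (j + 1) → S //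
          t 0 = s ∧ (∀ k : Fin j, v < a (t k.castSucc)) ∧ v < b (t (Fin.last j))},
        ⨅ k : Fin j, P (t.1 k.castSucc) (t.1 k.succ)) ≤ v :=
  until_threshold_le_general P a b v s
end
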